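/- Let n ≥ 2 and let f : {0,1}^n → {0,1} be a local rule of width n. If f is (2n−2)-conservative, then f is (2n−3)-conservative. -/

import Mathlib

/-- A local rule `f` of width `n` is `L`-conservative if for every `L`-periodic
bisequence `x : ℤ → Fin 2`, the sum of `f` applied to the `n`-blocks starting at
positions `1,…,L` equals the sum of `x` over positions `1,…,L`. -/
def LCons (n : ℕ) (f : (Fin n → Fin 2) → Fin 2) (L : ℕ) : Prop :=
  ∀ x : ℤ → Fin 2, (∀ i : ℤ, x (i + L) = x i) →
    (∑ i ∈ Finset.range L, (f (fun k => x ((i : ℤ) + 1 + (k : ℕ)))).val) =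
      ∑ i ∈ Finset.range L, (x ((i : ℤ) + 1)).val

def GG (m : ℕ) (f : (Fin (m+1) → Fin 2) → Fin 2) (y : ℤ → Fin 2) : ℤ :=
  ((f (fun k => y (k : ℕ))).val : ℤ) - ((y 0).val : ℤ)

lemma GG_congr {m : ℕ} (f : (Fin (m+1) → Fin 2) → Fin 2) {y z : ℤ → Fin 2}
    (h : ∀ k : ℤ, 0 ≤ k → k ≤ m → y k = z k) : GG m f y = GG m f z := by
  unfold GG
  have h1 : (fun k : Fin (m+1) => y (k : ℕ)) = (fun k : Fin (m+1) => z (k : ℕ)) := by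
    funext k
    have := k.isLt
    exact h _ (by omega) (by omega)
  rw [h1, h 0 le_rfl (by omega)]

lemma LCons_iff (m : ℕ) (f : (Fin (m+1) → Fin 2) → Fin 2) (L : ℕ) :
    LCons (m+1) f L ↔ ∀ y : ℤ → Fin 2, (∀ i, y (i + L) = y i) →
      ∑ r ∈ Finset.range L, GG m f (fun k => y ((r : ℤ) + k)) = 0 := by
  have key : ∀ x : ℤ → Fin 2,
      ((∑ i ∈ Finset.range L, (f (fun k => x ((i : ℤ) + 1 + (k : ℕ)))).val) =
      ∑ i ∈ Finset.range L, (x ((i : ℤ) + 1)).val) ↔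
      ∑ r ∈ Finset.range L, GG m f (fun k => x ((r : ℤ) + 1 + k)) = 0 := by
    intro x
    unfold GG
    rw [Finset.sum_sub_distrib, sub_eq_zero]
    simp only [add_zero]
    exact_mod_cast Iff.rfl
  constructor
  · intro h y hy
    have h2 := (key (fun i => y (i - 1))).1 (h (fun i => y (i - 1)) (by
      intro i
      have := hy (i - 1)
      rw [← this]; congr 1; ring))
    rw [← h2]
    refine Finset.sum_congr rfl fun r _ => ?_
    congr 1; funext k; congr 1; ring
  · intro h x hx
    rw [key]
    have h2 := h (fun i => x (i + 1)) (by
      intro i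
      have := hx (i + 1)
      rw [← this]; congr 1; ring)
    rw [← h2]
    refine Finset.sum_congr rfl fun r _ => ?_
    congr 1; funext k; congr 1; ring

def base (m : ℕ) (x : ℤ → Fin 2) (r : ℤ) : Fin 2 :=
  if r = 0 then x m else if r < m then 0 else x (r - m)

def CC (m : ℕ) (x : ℤ → Fin 2) (i : ℤ) : Fin 2 := base m x (i % (2 * m : ℤ))

lemma CC_eq (m : ℕ) (x : ℤ → Fin 2) (r k : ℤ) (hr : 0 ≤ r) (hr' : r < 2 * m)
    (hk : 0 ≤ k) (hk' : k ≤ m) :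
    CC m x (r + k) = if r + k < 2 * m then base m x (r + k) else base m x (r + k - 2 * m) := by
  unfold CC
  split_ifs with h
  · rw [Int.emod_eq_of_lt (by omega) h]
  · rw [← Int.sub_emod_right, Int.emod_eq_of_lt (by omega) (by omega)]

lemma CC_sum {m : ℕ} {f : (Fin (m+1) → Fin 2) → Fin 2} (h : LCons (m+1) f (2 * m))
    (x : ℤ → Fin 2) :
    ∑ r ∈ Finset.range (2 * m), GG m f (fun k => CC m x ((r : ℤ) + k)) = 0 := by
  refine (LCons_iff m f _).1 h (CC m x) ?_
  intro i
  unfold CC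
  push_cast
  rw [Int.add_emod_right]

def BB (m : ℕ) (a b : Fin 2) (k : ℤ) : Fin 2 := if k = 0 then a else if k = m then b else 0

lemma GG_zero {m : ℕ} (hm : 1 ≤ m) {f : (Fin (m+1) → Fin 2) → Fin 2}
    (h : LCons (m+1) f (2 * m)) : GG m f (fun _ => 0) = 0 := by
  have h1 := (LCons_iff m f _).1 h (fun _ => 0) (by simp)
  simp at h1
  omega

lemma bilin {m : ℕ} (hm : 1 ≤ m) {f : (Fin (m+1) → Fin 2) → Fin 2}
    (h : LCons (m+1) f (2 * m)) (a b : Fin 2) :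
    GG m f (BB m a b) = GG m f (BB m a 0) + GG m f (BB m 0 b) := by
  have h0 := GG_zero hm h
  have hB0 : BB m 0 0 = fun _ => 0 := by funext k; simp [BB]
  have h11 : GG m f (BB m 1 1) = GG m f (BB m 1 0) + GG m f (BB m 0 1) := by
    have e1 := CC_sum h (BB m 1 1)
    have e2 := CC_sum h (BB m 1 0)
    have e3 := CC_sum h (BB m 0 1)
    set d := GG m f (BB m 1 1) - GG m f (BB m 1 0) - GG m f (BB m 0 1) with hd
    have e : ∑ r ∈ Finset.range (2 * m), (GG m f (fun k => CC m (BB m 1 1) ((r : ℤ) + k))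
        - GG m f (fun k => CC m (BB m 1 0) ((r : ℤ) + k))
        - GG m f (fun k => CC m (BB m 0 1) ((r : ℤ) + k))) = 0 := by
      rw [Finset.sum_sub_distrib, Finset.sum_sub_distrib, e1, e2, e3]; simp
    have e' : ∀ r ∈ Finset.range (2 * m), (GG m f (fun k => CC m (BB m 1 1) ((r : ℤ) + k))
        - GG m f (fun k => CC m (BB m 1 0) ((r : ℤ) + k))
        - GG m f (fun k => CC m (BB m 0 1) ((r : ℤ) + k)))
        = (if r = 0 then d else 0) + (if r = m then d else 0) := by
      intro r hr
      rw [Finset.mem_range] at hr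
      have tac : ∀ (x z : ℤ → Fin 2), (∀ k : ℤ, 0 ≤ k → k ≤ m →
          (if r + k < 2 * m then base m x (r + k) else base m x (r + k - 2 * m)) = z k) →
          GG m f (fun k => CC m x ((r : ℤ) + k)) = GG m f z := by
        intro x z hz
        refine GG_congr f fun k hk hk' => ?_
        rw [← hz k hk hk']
        exact CC_eq m x r k (by omega) (by omega) hk hk'
      rcases Nat.eq_zero_or_pos r with rfl | hr0
      · rw [tac (BB m 1 1) (BB m 1 1), tac (BB m 1 0) (BB m 0 1), tac (BB m 0 1) (BB m 1 0)]
        · rw [if_pos rfl, if_neg (by omega)]; rw [hd]; ring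
        all_goals
          intro k hk hk'
          unfold base BB
          grind
      · rcases lt_trichotomy r m with hlt | rfl | hgt
        · rw [tac (BB m 1 1) (fun k => if k = m - r then 1 else 0),
            tac (BB m 1 0) (fun k => if k = m - r then 1 else 0), tac (BB m 0 1) (fun _ => 0)]
          · rw [if_neg (by omega), if_neg (by omega), h0]; ring
          all_goals
            intro k hk hk'
            unfold base BB
            grind
        · rw [tac (BB r 1 1) (BB r 1 1), tac (BB r 1 0) (BB r 1 0), tac (BB r 0 1) (BB r 0 1)]
          · rw [if_pos rfl, if_neg (by omega)]; rw [hd]; ring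
          all_goals
            intro k hk hk'
            unfold base BB
            grind
        · rw [tac (BB m 1 1) (fun k => if k = 2 * m - r then 1 else 0),
            tac (BB m 0 1) (fun k => if k = 2 * m - r then 1 else 0), tac (BB m 1 0) (fun _ => 0)]
          · rw [if_neg (by omega), if_neg (by omega), h0]; ring
          all_goals
            intro k hk hk'
            unfold base BB
            grind
    rw [Finset.sum_congr rfl e', Finset.sum_add_distrib, Finset.sum_ite_eq', Finset.sum_ite_eq',
      if_pos (by simp; omega), if_pos (by simp; omega)] at e
    omega
  have ha : a = 0 ∨ a = 1 := by omega
  have hb : b = 0 ∨ b = 1 := by omega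
  rcases ha with rfl | rfl <;> rcases hb with rfl | rfl <;> first | exact h11 | simp [hB0, h0]

def ZZ (j : ℕ) (x : ℤ → Fin 2) (k : ℤ) : Fin 2 := if k < j then 0 else x (k - j)

lemma step {m : ℕ} (hm : 1 ≤ m) {f : (Fin (m+1) → Fin 2) → Fin 2}
    (h : LCons (m+1) f (2 * m)) (x : ℤ → Fin 2) :
    ∑ j ∈ Finset.range (m+1), GG m f (ZZ j x) =
      ∑ j ∈ Finset.range (m+1), GG m f (ZZ (j+1) (fun i => x (i + 1))) := by
  have h0 := GG_zero hm h
  set x' : ℤ → Fin 2 := fun i => if i = 0 then 0 else x i with hx'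
  have e1 := CC_sum h x
  have e2 := CC_sum h x'
  have e : ∑ r ∈ Finset.range ((m + 1) + (m - 1)), (GG m f (fun k => CC m x ((r : ℤ) + k))
        - GG m f (fun k => CC m x' ((r : ℤ) + k))) = 0 := by
    rw [show (m + 1) + (m - 1) = 2 * m by omega, Finset.sum_sub_distrib, e1, e2]; simp
  have tac : ∀ (x z : ℤ → Fin 2) (r : ℕ), r < 2 * m → (∀ k : ℤ, 0 ≤ k → k ≤ m →
      (if r + k < 2 * m then base m x (r + k) else base m x (r + k - 2 * m)) = z k) →
      GG m f (fun k => CC m x ((r : ℤ) + k)) = GG m f z := by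
    intro x z r hr hz
    refine GG_congr f fun k hk hk' => ?_
    rw [← hz k hk hk']
    exact CC_eq m x r k (by omega) (by omega) hk hk'
  rw [Finset.sum_range_add, Finset.sum_eq_zero (s := Finset.range (m - 1)), add_zero] at e
  · have e3 : ∀ r ∈ Finset.range (m+1), (GG m f (fun k => CC m x ((r : ℤ) + k))
        - GG m f (fun k => CC m x' ((r : ℤ) + k))) =
        (fun j => GG m f (ZZ j x) - GG m f (ZZ (j+1) (fun i => x (i + 1)))) (m + 1 - 1 - r) := by
      intro r hr
      rw [Finset.mem_range] at hr
      simp only [Nat.add_sub_cancel]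
      rcases Nat.eq_zero_or_pos r with rfl | hr0
      · rw [tac x (BB m (x m) (x 0)) 0 (by omega), tac x' (BB m (x m) 0) 0 (by omega),
          bilin hm h (x m) (x 0),
          GG_congr f (y := ZZ (m - 0) x) (z := BB m 0 (x 0)),
          GG_congr f (y := ZZ (m - 0 + 1) _) (z := fun _ => 0), h0]
        · ring
        all_goals
          intro k hk hk'
          simp only [base, BB, ZZ, hx']
          grind
      · rw [tac x (ZZ (m - r) x) r (by omega),
          tac x' (ZZ (m - r + 1) (fun i => x (i + 1))) r (by omega)]
        all_goals
          intro k hk hk'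
          simp only [base, ZZ, hx']
          grind
    rw [Finset.sum_congr rfl e3, Finset.sum_range_reflect
      (fun j => GG m f (ZZ j x) - GG m f (ZZ (j+1) (fun i => x (i + 1)))) (m + 1), Finset.sum_sub_distrib] at e
    linarith
  · intro r hr
    rw [Finset.mem_range] at hr
    rw [sub_eq_zero]
    refine tac _ _ _ (by omega) ?_
    intro k hk hk'
    rw [CC_eq m _ _ k (by omega) (by omega) hk hk']
    simp only [base, hx']
    grind

/-- If a local rule of width `n ≥ 2` is `(2n-2)`-conservative, then it is
`(2n-3)`-conservative. -/
theorem stmt_1 (n : ℕ) (hn : 2 ≤ n) (f : (Fin n → Fin 2) → Fin 2)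
    (h : LCons n f (2 * n - 2)) :
    LCons n f (2 * n - 3) := by
  obtain ⟨m, rfl⟩ : ∃ m, n = m + 1 := ⟨n - 1, by omega⟩
  have hm : 1 ≤ m := by omega
  rw [show 2 * (m + 1) - 2 = 2 * m by omega] at h
  generalize 2 * (m + 1) - 3 = L
  rw [LCons_iff]
  intro y hy
  have h0 := GG_zero hm h
  let θ : ℕ → ℤ := fun r => ∑ j ∈ Finset.range m, GG m f (ZZ (j+1) (fun i => y (r + i)))
  have e : ∀ r ∈ Finset.range L, GG m f (fun k => y ((r : ℤ) + k)) = θ (r + 1) - θ r := by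
    intro r _
    have s := step hm h (fun i => y (r + i))
    rw [Finset.sum_range_succ', Finset.sum_range_succ] at s
    have a1 : GG m f (ZZ 0 (fun i => y (r + i))) = GG m f (fun k => y ((r : ℤ) + k)) := by
      refine GG_congr f fun k hk _ => ?_
      simp [ZZ, not_lt.2 hk]
    have a2 : GG m f (ZZ (m+1) (fun i => y (r + (i + 1)))) = 0 := by
      rw [← h0]
      refine GG_congr f fun k hk hk' => ?_
      simp only [ZZ]
      rw [if_pos (by push_cast; omega)]
    have a3 : (fun i : ℤ => y (((r + 1 : ℕ) : ℤ) + i)) = fun i => y (r + (i + 1)) := by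
      funext i; congr 1; push_cast; ring
    rw [a1, a2] at s
    simp only [θ, a3]
    linarith
  rw [Finset.sum_congr rfl e, Finset.sum_range_sub]
  have : (fun i : ℤ => y ((L : ℤ) + i)) = fun i => y (((0 : ℕ) : ℤ) + i) := by
    funext i; rw [add_comm, hy]; simp
  simp only [θ, this, sub_self]
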